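/- Let T be a triangulated category, let S be a class of objects of T, and let X, Y be classes of objects, closed under extensions and under direct summands, such that S⊆X, S[1]⊆Y, and Hom(A,B[1])=0 for all A∈X, B∈Y. Then the following are equivalent: (1) (X,Y) is a 1-cotorsion pair cut on S*S[1]; (2) (X,Y) is a left 1-cotorsion pair cut on S[1]; (3) (X,Y) is a right 1-cotorsion pair cut on S. -/

import Mathlib

/-!
The two approximation conditions are translated into each other by rotation: a triangle
`K → A → s[1]` is the same datum as a triangle `s → K → A`, which gives (2) ⇔ (3).

For (2), (3) ⇒ (1), let `s → M → s'[1]` be a triangle with `s, s' ∈ S`. The octahedral axiom provides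
homotopy pushouts and pullbacks (`exists_homotopyPushout`, `exists_homotopyPullback`). Pushing
`s → B → C` out along `s → M` gives `M → E → C` with `E` an extension of `s'[1] ∈ Y` by `B ∈ Y`;
pulling `K → A → s'[1]` back along `M → s'[1]` gives `K → E → M` with `E` an extension of `A ∈ X`
by `s ∈ X`.

For (1) ⇒ (2), the class `S` need not contain `0`, so `s[1]` need not lie in `S * S[1]`. Instead one
approximates `s ⊞ s[1]` by a triangle `K → A → s ⊞ s[1] → K[1]`. As `s ∈ X` and `K ∈ Y`, the
connecting map vanishes on `s`, so the triangle `K → A' → s[1] → K[1]` on its restriction to `s[1]`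
is a retract of the given one. Hence `A'` is a summand of `A` and lies in `X`
(`exists_retract_triangle`).
-/

open CategoryTheory Pretriangulated

universe v u

variable {T : Type u} [Category.{v} T] [Limits.HasZeroObject T] [HasShift T ℤ]
  [Preadditive T] [∀ n : ℤ, (shiftFunctor T n).Additive] [Pretriangulated T]
  [IsTriangulated T]

/-- `IsDT A B X` : there is a distinguished triangle `A → B → X → A[1]` in `T`. -/
def IsDT (A B X : T) : Prop :=
  ∃ (f : A ⟶ B) (g : B ⟶ X) (h : X ⟶ A⟦(1 : ℤ)⟧), Triangle.mk f g h ∈ distTriang T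

/-- `P` is closed under extensions. -/
def TClosedUnderExtensions (P : T → Prop) : Prop :=
  ∀ ⦃A B X : T⦄, IsDT A B X → P A → P X → P B

/-- `P` is closed under direct summands. -/
def TClosedUnderSummands (P : T → Prop) : Prop :=
  ∀ ⦃X Y : T⦄, P X → (∃ (i : Y ⟶ X) (r : X ⟶ Y), i ≫ r = 𝟙 Y) → P Y

/-- The class `S[n]`, consisting of the objects `s⟦n⟧` with `s ∈ S`. -/
def ShiftCls (S : T → Prop) (n : ℤ) : T → Prop := fun M => ∃ s, S s ∧ M = s⟦n⟧

/-- `S * R` : the class of objects `M` admitting a distinguished triangle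
`A → M → B → A[1]` with `A ∈ S` and `B ∈ R`. -/
def StarCls (S R : T → Prop) : T → Prop := fun M => ∃ A B, S A ∧ R B ∧ IsDT A M B

/-- `(X, Y)` is a left 1-cotorsion pair cut on `S`. -/
def IsLeft1CotorsionCutT (X Y S : T → Prop) : Prop :=
  TClosedUnderSummands X ∧
  (∀ ⦃A B : T⦄, X A → S A → Y B → ∀ f : A ⟶ B⟦(1 : ℤ)⟧, f = 0) ∧
  (∀ ⦃s : T⦄, S s → ∃ (K A : T), X A ∧ (∃ y, Y y ∧ Nonempty (K ≅ y)) ∧ IsDT K A s)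

/-- `(X, Y)` is a right 1-cotorsion pair cut on `S`. -/
def IsRight1CotorsionCutT (X Y S : T → Prop) : Prop :=
  TClosedUnderSummands Y ∧
  (∀ ⦃A B : T⦄, X A → Y B → S B → ∀ f : A ⟶ B⟦(1 : ℤ)⟧, f = 0) ∧
  (∀ ⦃s : T⦄, S s → ∃ (B Cn : T), Y B ∧ (∃ x, X x ∧ Nonempty (Cn ≅ x)) ∧ IsDT s B Cn)

/-- `(X, Y)` is a 1-cotorsion pair cut on `S`. -/
def Is1CotorsionCutT (X Y S : T → Prop) : Prop :=
  IsLeft1CotorsionCutT X Y S ∧ IsRight1CotorsionCutT X Y S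

set_option linter.unusedSectionVars false

theorem IsDT.of_iso {A B C A' B' C' : T} (h : IsDT A B C) (eA : A ≅ A') (eB : B ≅ B')
    (eC : C ≅ C') : IsDT A' B' C' := by
  obtain ⟨f, g, w, hT⟩ := h
  refine ⟨eA.inv ≫ f ≫ eB.hom, eB.inv ≫ g ≫ eC.hom, eC.inv ≫ w ≫ eA.hom⟦(1 : ℤ)⟧', ?_⟩
  refine isomorphic_distinguished _ hT _ ?_
  refine Triangle.isoMk _ _ eA.symm eB.symm eC.symm ?_ ?_ ?_
  · change (eA.inv ≫ f ≫ eB.hom) ≫ eB.inv = eA.inv ≫ f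
    simp
  · change (eB.inv ≫ g ≫ eC.hom) ≫ eC.inv = eB.inv ≫ g
    simp
  · change (eC.inv ≫ w ≫ eA.hom⟦(1 : ℤ)⟧') ≫ eA.inv⟦(1 : ℤ)⟧' = eC.inv ≫ w
    simp [← Functor.map_comp]

theorem IsDT.rotate {A B C : T} (h : IsDT A B C) : IsDT B C (A⟦(1 : ℤ)⟧) := by
  obtain ⟨f, g, w, hT⟩ := h
  exact ⟨_, _, _, rot_of_distTriang _ hT⟩

theorem IsDT.invRotate {A B C : T} (h : IsDT A B C) : IsDT (C⟦(-1 : ℤ)⟧) A B := by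
  obtain ⟨f, g, w, hT⟩ := h
  exact ⟨_, _, _, inv_rot_of_distTriang _ hT⟩

/-- Homotopy pushout `E` of `M ← s → B`: the octahedral axiom for `C[-1] → s → M`, where `s → M` has
cone `t` and `s → B` has cone `C`. -/
theorem exists_homotopyPushout {s M t B C : T} (h₁ : IsDT s M t) (h₂ : IsDT s B C) :
    ∃ E : T, IsDT M E C ∧ IsDT B E t := by
  obtain ⟨f, g, w, hM⟩ := h₁
  obtain ⟨a, b, c, hB⟩ := h₂.invRotate
  obtain ⟨E, p, q, hE⟩ := distinguished_cocone_triangle (a ≫ f)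
  let O := Triangulated.someOctahedron rfl hB hM hE
  have hE' : IsDT (C⟦(-1 : ℤ)⟧) M E := ⟨_, _, _, hE⟩
  exact ⟨E, hE'.rotate.of_iso (Iso.refl _) (Iso.refl _)
    ((shiftFunctorCompIsoId T (-1 : ℤ) 1 (by norm_num)).app C), ⟨_, _, _, O.mem⟩⟩

/-- Homotopy pullback `E` of `M → t ← A`. Since homotopy cartesian squares are homotopy cocartesian,
it is the homotopy pushout of `s ← t[-1] → K`. -/
theorem exists_homotopyPullback {s M t K A : T} (h₁ : IsDT s M t) (h₂ : IsDT K A t) :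
    ∃ E : T, IsDT s E A ∧ IsDT K E M :=
  exists_homotopyPushout h₁.invRotate h₂.invRotate

theorem TClosedUnderSummands.of_iso {P : T → Prop} (hP : TClosedUnderSummands P) {A B : T}
    (e : A ≅ B) (hB : P B) : P A :=
  hP hB ⟨e.hom, e.inv, e.hom_inv_id⟩

theorem exists_middle_map {K A A' Q Q' : T} {f : K ⟶ A} {g : A ⟶ Q} {w : Q ⟶ K⟦(1 : ℤ)⟧}
    {f' : K ⟶ A'} {g' : A' ⟶ Q'} {w' : Q' ⟶ K⟦(1 : ℤ)⟧} (hT : Triangle.mk f g w ∈ distTriang T)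
    (hT' : Triangle.mk f' g' w' ∈ distTriang T) (b : Q ⟶ Q') (hb : w = b ≫ w') :
    ∃ i : A ⟶ A', f ≫ i = f' ∧ g ≫ b = i ≫ g' := by
  obtain ⟨i, h₁, h₂⟩ := complete_distinguished_triangle_morphism₂ _ _ hT hT' (𝟙 K) b
    (show w ≫ (𝟙 K)⟦(1 : ℤ)⟧' = b ≫ w' by rw [CategoryTheory.Functor.map_id, Category.comp_id, hb])
  exact ⟨i, h₁.trans (Category.id_comp _), h₂⟩

/-- The summand `Q` of the base of a triangle `K → A → P ⊞ Q → K[1]` inherits a triangle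
`K → A' → Q → K[1]` with `A'` a summand of `A`, provided every map `P → K[1]` vanishes. -/
theorem exists_retract_triangle {K A P Q : T} [Limits.HasBinaryBiproduct P Q]
    (h : IsDT K A (P ⊞ Q)) (hP : ∀ f : P ⟶ K⟦(1 : ℤ)⟧, f = 0) :
    ∃ A' : T, IsDT K A' Q ∧ ∃ (i : A' ⟶ A) (r : A ⟶ A'), i ≫ r = 𝟙 A' := by
  obtain ⟨f, g, w, hT⟩ := h
  obtain ⟨A', f', g', hT'⟩ :=
    distinguished_cocone_triangle₂ ((Limits.biprod.inr : Q ⟶ P ⊞ Q) ≫ w)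
  have hw : w = Limits.biprod.snd ≫ Limits.biprod.inr ≫ w := by
    apply Limits.biprod.hom_ext'
    · simpa using hP _
    · simp
  obtain ⟨i, hi₁, hi₂⟩ := exists_middle_map hT' hT (Limits.biprod.inr : Q ⟶ P ⊞ Q) rfl
  obtain ⟨r, hr₁, hr₂⟩ := exists_middle_map hT hT' (Limits.biprod.snd : P ⊞ Q ⟶ Q) hw
  -- The composite is part of an endomorphism of the triangle which is the identity on the two ends.
  let φ : Triangle.mk f' g' ((Limits.biprod.inr : Q ⟶ P ⊞ Q) ≫ w) ⟶
      Triangle.mk f' g' ((Limits.biprod.inr : Q ⟶ P ⊞ Q) ≫ w) :=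
    { hom₁ := 𝟙 K
      hom₂ := i ≫ r
      hom₃ := 𝟙 Q
      comm₁ := by
        change f' ≫ i ≫ r = 𝟙 K ≫ f'
        rw [← Category.assoc, hi₁, hr₁, Category.id_comp]
      comm₂ := by
        change g' ≫ 𝟙 Q = (i ≫ r) ≫ g'
        rw [Category.assoc, ← hr₂, ← Category.assoc, ← hi₂, Category.assoc,
          Limits.biprod.inr_snd]
      comm₃ := by
        change (Limits.biprod.inr ≫ w) ≫ (𝟙 K)⟦(1 : ℤ)⟧' = 𝟙 Q ≫ Limits.biprod.inr ≫ w
        rw [CategoryTheory.Functor.map_id, Category.comp_id, Category.id_comp] }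
  have : IsIso (i ≫ r) :=
    isIso₂_of_isIso₁₃ φ hT' hT' (inferInstanceAs (IsIso (𝟙 K))) (inferInstanceAs (IsIso (𝟙 Q)))
  exact ⟨A', ⟨_, _, _, hT'⟩, i, r ≫ inv (i ≫ r), by rw [← Category.assoc, IsIso.hom_inv_id]⟩

theorem stmt_18 (S X Y : T → Prop)
    (hXext : TClosedUnderExtensions X) (hYext : TClosedUnderExtensions Y)
    (hXsum : TClosedUnderSummands X) (hYsum : TClosedUnderSummands Y)
    (hSX : ∀ ⦃s : T⦄, S s → X s)
    (hS1Y : ∀ ⦃s : T⦄, S s → Y (s⟦(1 : ℤ)⟧))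
    (hvan : ∀ ⦃A B : T⦄, X A → Y B → ∀ f : A ⟶ B⟦(1 : ℤ)⟧, f = 0) :
    (Is1CotorsionCutT X Y (StarCls S (ShiftCls S 1)) ↔
      IsLeft1CotorsionCutT X Y (ShiftCls S 1)) ∧
    (IsLeft1CotorsionCutT X Y (ShiftCls S 1) ↔ IsRight1CotorsionCutT X Y S) := by
  have h23 : IsLeft1CotorsionCutT X Y (ShiftCls S 1) ↔ IsRight1CotorsionCutT X Y S := by
    constructor
    · rintro ⟨-, -, h⟩
      refine ⟨hYsum, fun A B hA hB _ => hvan hA hB, fun s hs => ?_⟩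
      obtain ⟨K, A, hA, ⟨y, hy, ⟨e⟩⟩, hT⟩ := h ⟨s, hs, rfl⟩
      exact ⟨K, A, hYsum.of_iso e hy, ⟨A, hA, ⟨Iso.refl _⟩⟩,
        hT.invRotate.of_iso ((shiftFunctorCompIsoId T (1 : ℤ) (-1) (by norm_num)).app s)
          (Iso.refl _) (Iso.refl _)⟩
    · rintro ⟨-, -, h⟩
      refine ⟨hXsum, fun A B hA _ hB => hvan hA hB, ?_⟩
      rintro _ ⟨s, hs, rfl⟩
      obtain ⟨B, C, hB, ⟨x, hx, ⟨e⟩⟩, hT⟩ := h hs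
      exact ⟨B, C, hXsum.of_iso e hx, ⟨B, hB, ⟨Iso.refl _⟩⟩, hT.rotate⟩
  refine ⟨⟨?_, fun h2 => ?_⟩, h23⟩
  · rintro ⟨⟨-, -, h⟩, -⟩
    refine ⟨hXsum, fun A B hA _ hB => hvan hA hB, ?_⟩
    rintro _ ⟨s, hs, rfl⟩
    obtain ⟨K, A, hA, ⟨y, hy, ⟨e⟩⟩, hT⟩ := h (s := s ⊞ s⟦(1 : ℤ)⟧)
      ⟨s, s⟦(1 : ℤ)⟧, hs, ⟨s, hs, rfl⟩, _, _, _, binaryBiproductTriangle_distinguished _ _⟩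
    obtain ⟨A', hT', hA'⟩ := exists_retract_triangle hT (hvan (hSX hs) (hYsum.of_iso e hy))
    exact ⟨K, A', hXsum hA hA', ⟨y, hy, ⟨e⟩⟩, hT'⟩
  · have h3 := h23.1 h2
    refine ⟨⟨hXsum, fun A B hA _ hB => hvan hA hB, ?_⟩,
      ⟨hYsum, fun A B hA hB _ => hvan hA hB, ?_⟩⟩
    · rintro M ⟨s, t, hs, ht, hM⟩
      obtain ⟨K, A, hA, hK, hT⟩ := h2.2.2 ht
      obtain ⟨E, hE, hE'⟩ := exists_homotopyPullback hM hT
      exact ⟨K, E, hXext hE (hSX hs) hA, hK, hE'⟩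
    · rintro M ⟨s, _, hs, ⟨t, ht, rfl⟩, hM⟩
      obtain ⟨B, C, hB, hC, hT⟩ := h3.2.2 hs
      obtain ⟨E, hE, hE'⟩ := exists_homotopyPushout hM hT
      exact ⟨E, C, hYext hE' hB (hS1Y ht), hC, hE⟩
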